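/- There exist a subfield F ⊊ ℝ and a nonnegative matrix A with entries in F such that rank₊(A, F) ≠ rank₊(A, ℝ). -/

import Mathlib

/-!
The field is `ℚ`, and the matrix is a `14 × 16` matrix with entries in `{0, 1, 2}` whose nonnegative
rank over `ℝ` is `13`, while every factorization of length `13` contains the number `√2`.

*Rigidity.* The entries `(e, e)`, `e < 13`, form a fooling set: they equal `1`, and for `e ≠ e'` one
of the entries `(e, e')`, `(e', e)` vanishes. Hence a factorization with at most `13` terms has
exactly one term for each `e`, and after rescaling that term is `β e` times `γ e`, where
`β e e = γ e e = 1` (`fooling_normal_form`). A zero of the matrix kills the corresponding product in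
each term, so most coordinates of `β e` and `γ e` are zero.

*Gadgets.* Rows and columns `0-3`, `4-7`, `8-11` carry three copies of the singular matrix
`T = [1 1 0 0; 0 1 1 0; 0 0 1 1; 1 0 0 1]`. An additional column equal to a unit vector on the rows of
such a block forces its four terms to factor `T` as `I * T` (`cycle_forces`); dually, an additional
row equal to a unit vector forces `T * I`. In the first case an additional row equal to `(1, 1, 1, 1)`
on the block has coefficients `(t, 1 - t, t, 1 - t)` with `t` free in `[0, 1]`, which makes the
corresponding entries of that row adjustable by multiples of `t`. The first block gives a
parameter `t` to row `12`, the second a parameter `t'` to row `13`, and the third (transposed) gives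
parameters to columns `14` and `15`.

*The equation.* The remaining term, number `12`, is `[1, x; y, 2]` on rows and columns `12, 13`, so
`x * y = 2`, where `x = 2 - t` and `y = 2 - t'`. Columns `14` and `15` link the two rows: writing
`z`, `z'` for the coordinates of `γ 12` there, they give `(y - 1) * z = y - x` and
`(y - 1) * z' = x - y`. Since `y ≥ 1` and `z, z' ≥ 0`, this forces `x = y`, that is, `x = √2`
(`sqrt_two_mem`). Conversely `t = t' = 2 - √2` does yield a factorization over `ℝ`
(`exists_real_factorization`).
-/


/-- The nonnegative rank of a real matrix `A` over a subfield `F` of `ℝ`: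
the smallest `k` such that `A` is a sum of `k` rank-one matrices, each with
nonnegative entries belonging to `F`. -/
noncomputable def nonnegRank {m n : ℕ} (F : Subfield ℝ) (A : Matrix (Fin m) (Fin n) ℝ) : ℕ :=
  sInf {k | ∃ b : Fin k → Fin m → ℝ, ∃ c : Fin k → Fin n → ℝ,
    (∀ l i, 0 ≤ b l i ∧ b l i ∈ F) ∧ (∀ l j, 0 ≤ c l j ∧ c l j ∈ F) ∧
    A = ∑ l, Matrix.vecMulVec (b l) (c l)}

/-! ### The matrix -/

/-- The matrix separating the two nonnegative ranks, with natural number entries. The blocks `0-3`,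
`4-7`, `8-11` are the three gadgets; rows `12, 13` and columns `12, 13` carry the equation
`x * y = 2`, and columns `14, 15` force `x = y`. -/
def wit : Matrix (Fin 14) (Fin 16) ℕ :=
  !![1, 1, 0, 0, 0, 0, 0, 0, 0, 0, 0, 0, 0, 1, 1, 0;
     0, 1, 1, 0, 0, 0, 0, 0, 0, 0, 0, 0, 0, 0, 0, 1;
     0, 0, 1, 1, 0, 0, 0, 0, 0, 0, 0, 0, 0, 0, 0, 0;
     1, 0, 0, 1, 0, 0, 0, 0, 0, 0, 0, 0, 0, 0, 0, 0;
     0, 0, 0, 0, 1, 1, 0, 0, 0, 0, 0, 0, 1, 0, 1, 0;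
     0, 0, 0, 0, 0, 1, 1, 0, 0, 0, 0, 0, 0, 0, 0, 1;
     0, 0, 0, 0, 0, 0, 1, 1, 0, 0, 0, 0, 0, 0, 0, 0;
     0, 0, 0, 0, 1, 0, 0, 1, 0, 0, 0, 0, 0, 0, 0, 0;
     0, 0, 0, 0, 0, 0, 0, 0, 1, 1, 0, 0, 0, 0, 1, 1;
     0, 0, 0, 0, 0, 0, 0, 0, 0, 1, 1, 0, 0, 0, 1, 1;
     0, 0, 0, 0, 0, 0, 0, 0, 0, 0, 1, 1, 0, 0, 1, 1;
     0, 0, 0, 0, 0, 0, 0, 0, 1, 0, 0, 1, 0, 0, 1, 1;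
     1, 1, 1, 1, 0, 0, 0, 0, 1, 0, 0, 0, 1, 2, 1, 1;
     0, 0, 0, 0, 1, 1, 1, 1, 0, 0, 1, 0, 2, 2, 1, 1]

/-- Rational parts of the left factors of the real factorization: its `l`-th left factor is
`leftRat l + leftIrr l * √2`. -/
def leftRat : Matrix (Fin 13) (Fin 14) ℤ :=
  !![1, 0, 0, 0, 0, 0, 0, 0, 0, 0, 0, 0, 2, 0;
     0, 1, 0, 0, 0, 0, 0, 0, 0, 0, 0, 0, -1, 0;
     0, 0, 1, 0, 0, 0, 0, 0, 0, 0, 0, 0, 2, 0;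
     0, 0, 0, 1, 0, 0, 0, 0, 0, 0, 0, 0, -1, 0;
     0, 0, 0, 0, 1, 0, 0, 0, 0, 0, 0, 0, 0, 2;
     0, 0, 0, 0, 0, 1, 0, 0, 0, 0, 0, 0, 0, -1;
     0, 0, 0, 0, 0, 0, 1, 0, 0, 0, 0, 0, 0, 2;
     0, 0, 0, 0, 0, 0, 0, 1, 0, 0, 0, 0, 0, -1;
     0, 0, 0, 0, 0, 0, 0, 0, 1, 0, 0, 1, 1, 0;
     0, 0, 0, 0, 0, 0, 0, 0, 1, 1, 0, 0, 0, 0;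
     0, 0, 0, 0, 0, 0, 0, 0, 0, 1, 1, 0, 0, 1;
     0, 0, 0, 0, 0, 0, 0, 0, 0, 0, 1, 1, 0, 0;
     0, 0, 0, 0, 0, 0, 0, 0, 0, 0, 0, 0, 1, 0]

/-- Coefficients of `√2` in the left factors of the real factorization. -/
def leftIrr : Matrix (Fin 13) (Fin 14) ℤ :=
  !![0, 0, 0, 0, 0, 0, 0, 0, 0, 0, 0, 0, -1, 0;
     0, 0, 0, 0, 0, 0, 0, 0, 0, 0, 0, 0, 1, 0;
     0, 0, 0, 0, 0, 0, 0, 0, 0, 0, 0, 0, -1, 0;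
     0, 0, 0, 0, 0, 0, 0, 0, 0, 0, 0, 0, 1, 0;
     0, 0, 0, 0, 0, 0, 0, 0, 0, 0, 0, 0, 0, -1;
     0, 0, 0, 0, 0, 0, 0, 0, 0, 0, 0, 0, 0, 1;
     0, 0, 0, 0, 0, 0, 0, 0, 0, 0, 0, 0, 0, -1;
     0, 0, 0, 0, 0, 0, 0, 0, 0, 0, 0, 0, 0, 1;
     0, 0, 0, 0, 0, 0, 0, 0, 0, 0, 0, 0, 0, 0;
     0, 0, 0, 0, 0, 0, 0, 0, 0, 0, 0, 0, 0, 0;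
     0, 0, 0, 0, 0, 0, 0, 0, 0, 0, 0, 0, 0, 0;
     0, 0, 0, 0, 0, 0, 0, 0, 0, 0, 0, 0, 0, 0;
     0, 0, 0, 0, 0, 0, 0, 0, 0, 0, 0, 0, 0, 1]

/-- Rational parts of the right factors of the real factorization: its `l`-th right factor is
`rightRat l + rightIrr l * √2`. -/
def rightRat : Matrix (Fin 13) (Fin 16) ℤ :=
  !![1, 1, 0, 0, 0, 0, 0, 0, 0, 0, 0, 0, 0, 1, 1, 0;
     0, 1, 1, 0, 0, 0, 0, 0, 0, 0, 0, 0, 0, 0, 0, 1;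
     0, 0, 1, 1, 0, 0, 0, 0, 0, 0, 0, 0, 0, 0, 0, 0;
     1, 0, 0, 1, 0, 0, 0, 0, 0, 0, 0, 0, 0, 0, 0, 0;
     0, 0, 0, 0, 1, 1, 0, 0, 0, 0, 0, 0, 1, 0, 1, 0;
     0, 0, 0, 0, 0, 1, 1, 0, 0, 0, 0, 0, 0, 0, 0, 1;
     0, 0, 0, 0, 0, 0, 1, 1, 0, 0, 0, 0, 0, 0, 0, 0;
     0, 0, 0, 0, 1, 0, 0, 1, 0, 0, 0, 0, 0, 0, 0, 0;
     0, 0, 0, 0, 0, 0, 0, 0, 1, 0, 0, 0, 0, 0, -1, 2;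
     0, 0, 0, 0, 0, 0, 0, 0, 0, 1, 0, 0, 0, 0, 2, -1;
     0, 0, 0, 0, 0, 0, 0, 0, 0, 0, 1, 0, 0, 0, -1, 2;
     0, 0, 0, 0, 0, 0, 0, 0, 0, 0, 0, 1, 0, 0, 2, -1;
     0, 0, 0, 0, 0, 0, 0, 0, 0, 0, 0, 0, 1, 0, 0, 0]

/-- Coefficients of `√2` in the right factors of the real factorization. -/
def rightIrr : Matrix (Fin 13) (Fin 16) ℤ :=
  !![0, 0, 0, 0, 0, 0, 0, 0, 0, 0, 0, 0, 0, 0, 0, 0;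
     0, 0, 0, 0, 0, 0, 0, 0, 0, 0, 0, 0, 0, 0, 0, 0;
     0, 0, 0, 0, 0, 0, 0, 0, 0, 0, 0, 0, 0, 0, 0, 0;
     0, 0, 0, 0, 0, 0, 0, 0, 0, 0, 0, 0, 0, 0, 0, 0;
     0, 0, 0, 0, 0, 0, 0, 0, 0, 0, 0, 0, 0, 0, 0, 0;
     0, 0, 0, 0, 0, 0, 0, 0, 0, 0, 0, 0, 0, 0, 0, 0;
     0, 0, 0, 0, 0, 0, 0, 0, 0, 0, 0, 0, 0, 0, 0, 0;
     0, 0, 0, 0, 0, 0, 0, 0, 0, 0, 0, 0, 0, 0, 0, 0;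
     0, 0, 0, 0, 0, 0, 0, 0, 0, 0, 0, 0, 0, 0, 1, -1;
     0, 0, 0, 0, 0, 0, 0, 0, 0, 0, 0, 0, 0, 0, -1, 1;
     0, 0, 0, 0, 0, 0, 0, 0, 0, 0, 0, 0, 0, 0, 1, -1;
     0, 0, 0, 0, 0, 0, 0, 0, 0, 0, 0, 0, 0, 0, -1, 1;
     0, 0, 0, 0, 0, 0, 0, 0, 0, 0, 0, 0, 0, 1, 0, 0]

/-- The matrix `wit`, with entries regarded as real numbers. -/
def witReal : Matrix (Fin 14) (Fin 16) ℝ := wit.map (↑)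

/-! ### Factorizations along a fooling set -/

/-- Over a fooling set of `r` unit entries `(f e, g e)`, a factorization with at most `r` terms has
exactly one term for each `e`. Replacing `b ⊗ c` by `(c (g e) • b) ⊗ (b (f e) • c)` normalizes both
coordinates at `e` to `1` without leaving the field. -/
theorem fooling_normal_form {m n r k : ℕ} (F : Subfield ℝ) (A : Matrix (Fin m) (Fin n) ℝ)
    (f : Fin r → Fin m) (g : Fin r → Fin n) (hone : ∀ e, A (f e) (g e) = 1)
    (hfool : ∀ e e', e ≠ e' → A (f e) (g e') = 0 ∨ A (f e') (g e) = 0) (hk : k ≤ r)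
    (b : Fin k → Fin m → ℝ) (c : Fin k → Fin n → ℝ)
    (hb : ∀ l i, 0 ≤ b l i ∧ b l i ∈ F) (hc : ∀ l j, 0 ≤ c l j ∧ c l j ∈ F)
    (hA : A = ∑ l, Matrix.vecMulVec (b l) (c l)) :
    ∃ β : Fin r → Fin m → ℝ, ∃ γ : Fin r → Fin n → ℝ,
      (∀ e i, 0 ≤ β e i ∧ β e i ∈ F) ∧ (∀ e j, 0 ≤ γ e j ∧ γ e j ∈ F) ∧
      (∀ e, β e (f e) = 1) ∧ (∀ e, γ e (g e) = 1) ∧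
      ∀ i j, A i j = ∑ e, β e i * γ e j := by
  have hsum : ∀ i j, A i j = ∑ l, b l i * c l j := by
    intro i j
    rw [hA, Matrix.sum_apply]
    simp [Matrix.vecMulVec_apply]
  have hzero : ∀ i j, A i j = 0 → ∀ l, b l i * c l j = 0 := by
    intro i j h l
    rw [hsum i j, Finset.sum_eq_zero_iff_of_nonneg
      (fun l _ => mul_nonneg (hb l i).1 (hc l j).1)] at h
    exact h l (Finset.mem_univ l)
  have hex : ∀ e, ∃ l, b l (f e) * c l (g e) ≠ 0 := by
    intro e
    by_contra! h
    have h1 := hone e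
    rw [hsum, Finset.sum_eq_zero (fun l _ => h l)] at h1
    exact zero_ne_one h1
  -- `σ e` is a term that is positive at the fooling entry `e`.
  choose σ hσ using hex
  have hother : ∀ e e', e ≠ e' → b (σ e') (f e) * c (σ e') (g e) = 0 := by
    intro e e' hne
    have h' := hσ e'
    rcases hfool e e' hne with h | h
    · have := hzero _ _ h (σ e')
      rcases mul_eq_zero.1 this with h2 | h2
      · simp [h2]
      · simp [h2] at h'
    · have := hzero _ _ h (σ e')
      rcases mul_eq_zero.1 this with h2 | h2
      · simp [h2] at h'
      · simp [h2]
  have hinj : Function.Injective σ := by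
    intro e e' h
    by_contra hne
    have := hother e e' hne
    rw [← h] at this
    exact hσ e this
  have hcard : k = r := le_antisymm hk (by simpa using Fintype.card_le_of_injective σ hinj)
  subst hcard
  have hbij : Function.Bijective σ := hinj.bijective_of_finite
  have hsum' : ∀ i j, A i j = ∑ e, b (σ e) i * c (σ e) j := fun i j => by
    rw [hsum i j]
    exact (hbij.sum_comp (fun l => b l i * c l j)).symm
  have hdiag : ∀ e, b (σ e) (f e) * c (σ e) (g e) = 1 := by
    intro e
    rw [← hone e, hsum', Finset.sum_eq_single e (fun e' _ h => hother e e' h.symm) (by simp)]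
  refine ⟨fun e i => c (σ e) (g e) * b (σ e) i, fun e j => b (σ e) (f e) * c (σ e) j,
    fun e i => ⟨mul_nonneg (hc _ _).1 (hb _ _).1, F.mul_mem (hc _ _).2 (hb _ _).2⟩,
    fun e j => ⟨mul_nonneg (hb _ _).1 (hc _ _).1, F.mul_mem (hb _ _).2 (hc _ _).2⟩,
    fun e => (mul_comm _ _).trans (hdiag e), hdiag, fun i j => ?_⟩
  rw [hsum' i j]
  refine Finset.sum_congr rfl fun e _ => ?_
  linear_combination (-(b (σ e) i * c (σ e) j)) * hdiag e

/-! ### The real factorization -/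

theorem exists_real_factorization : ∃ b : Fin 13 → Fin 14 → ℝ, ∃ c : Fin 13 → Fin 16 → ℝ,
    (∀ l i, 0 ≤ b l i) ∧ (∀ l j, 0 ≤ c l j) ∧
    witReal = ∑ l, Matrix.vecMulVec (b l) (c l) := by
  have hs : √2 * √2 = (2 : ℝ) := Real.mul_self_sqrt (by norm_num)
  have hs0 : 0 ≤ √2 := Real.sqrt_nonneg 2
  have hs1 : 1 ≤ √2 := by nlinarith
  have hs2 : √2 ≤ 2 := by nlinarith
  -- The five values `0`, `1`, `2 - √2`, `√2 - 1`, `√2` occurring in the factors.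
  have hnn : ∀ p q : ℤ, (p, q) ∈ [((0 : ℤ), (0 : ℤ)), (1, 0), (2, -1), (-1, 1), (0, 1)] →
      0 ≤ (p : ℝ) + q * √2 := by
    intro p q h
    simp only [List.mem_cons, Prod.mk.injEq, List.not_mem_nil, or_false] at h
    rcases h with ⟨rfl, rfl⟩ | ⟨rfl, rfl⟩ | ⟨rfl, rfl⟩ | ⟨rfl, rfl⟩ | ⟨rfl, rfl⟩ <;>
      push_cast <;> linarith
  have hl : ∀ l i, (leftRat l i, leftIrr l i) ∈
      [((0 : ℤ), (0 : ℤ)), (1, 0), (2, -1), (-1, 1), (0, 1)] := by decide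
  have hr : ∀ l i, (rightRat l i, rightIrr l i) ∈
      [((0 : ℤ), (0 : ℤ)), (1, 0), (2, -1), (-1, 1), (0, 1)] := by decide
  -- The product of the factors over `ℤ[√2]`, split into its rational and irrational parts.
  have h1 : ∀ i j, (wit i j : ℤ) =
      ∑ l, (leftRat l i * rightRat l j + 2 * (leftIrr l i * rightIrr l j)) := by decide +kernel
  have h2 : ∀ i j, 0 =
      ∑ l, (leftRat l i * rightIrr l j + leftIrr l i * rightRat l j) := by decide +kernel
  refine ⟨fun l i => leftRat l i + leftIrr l i * √2, fun l j => rightRat l j + rightIrr l j * √2,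
    fun l i => hnn _ _ (hl l i), fun l j => hnn _ _ (hr l j), ?_⟩
  ext i j
  have e1 := congrArg (Int.cast : ℤ → ℝ) (h1 i j)
  have e2 := congrArg (Int.cast : ℤ → ℝ) (h2 i j)
  push_cast at e1 e2
  rw [Matrix.sum_apply]
  simp only [Matrix.vecMulVec_apply, witReal, Matrix.map_apply]
  rw [e1, ← add_zero (∑ l, _), ← zero_mul √2, e2, Finset.sum_mul, ← Finset.sum_add_distrib]
  refine Finset.sum_congr rfl fun l _ => ?_
  linear_combination (-(leftIrr l i * rightIrr l j : ℝ)) * hs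

/-! ### Factorizations of length thirteen contain the square root of two -/

/-- The rigidity of the `4`-cycle. Here `v k` and `u k` are the contributions of the terms `k` and
`k + 1` to the entry `(k, k + 1)` of the block, and `w` is the vector of coordinates, in the four
terms, of an additional column equal to the unit vector `(1, 0, 0, 0)` on the block. The row equations
force `w = (1, 0, 0, 0)`, then `u 3 = 0`, and then this propagates backwards around the cycle. -/
theorem cycle_forces {u v w : Fin 4 → ℝ} (hu : ∀ k, 0 ≤ u k) (hw : ∀ k, 0 ≤ w k)
    (huv : ∀ k, v k + u k = 1) (h02 : ∀ k, u k * v (k + 1) = 0)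
    (hw' : ∀ k, w k + u k * w (k + 1) = if k = 0 then 1 else 0) :
    w 0 = 1 ∧ ∀ k, v k = 1 := by
  have z : ∀ k, k ≠ 0 → w k = 0 ∧ u k * w (k + 1) = 0 := fun k hk =>
    (add_eq_zero_iff_of_nonneg (hw k) (mul_nonneg (hu k) (hw _))).1 ((hw' k).trans (if_neg hk))
  have w0 : w 0 = 1 := by simpa [(z 1 (by decide)).1] using hw' 0
  have u3 : u 3 = 0 := by
    have := (z 3 (by decide)).2
    rwa [show (3 + 1 : Fin 4) = 0 from rfl, w0, mul_one] at this
  have step : ∀ k, u (k + 1) = 0 → u k = 0 := fun k h => by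
    have h1 := huv (k + 1)
    have h2 := h02 k
    rw [h, add_zero] at h1
    rwa [h1, mul_one] at h2
  have u2 : u 2 = 0 := step 2 u3
  have u1 : u 1 = 0 := step 1 u2
  have u0 : u 0 = 0 := step 0 u1
  refine ⟨w0, fun k => ?_⟩
  have hk : u k = 0 := by fin_cases k <;> assumption
  simpa [hk] using huv k

/-- The coordinate `x` of the term `12` in column `13` is `√2`, for every factorization of length at
most `13`. -/
theorem sqrt_two_mem (F : Subfield ℝ) {k : ℕ} (hk : k ≤ 13)
    (b : Fin k → Fin 14 → ℝ) (c : Fin k → Fin 16 → ℝ)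
    (hb : ∀ l i, 0 ≤ b l i ∧ b l i ∈ F) (hc : ∀ l j, 0 ≤ c l j ∧ c l j ∈ F)
    (hA : witReal = ∑ l, Matrix.vecMulVec (b l) (c l)) : √2 ∈ F := by
  let f : Fin 13 → Fin 14 := Fin.castLE (by decide)
  let g : Fin 13 → Fin 16 := Fin.castLE (by decide)
  have hone : ∀ e, wit (f e) (g e) = 1 := by decide
  have hfool : ∀ e e', e ≠ e' → wit (f e) (g e') = 0 ∨ wit (f e') (g e) = 0 := by decide
  obtain ⟨β, γ, hβ, hγ, hβ1, hγ1, hsum⟩ := fooling_normal_form F witReal f g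
    (fun e => by simp [witReal, hone e])
    (fun e e' h => by simpa [witReal] using hfool e e' h) hk b c hb hc hA
  have hzero : ∀ i j, wit i j = 0 → ∀ e, β e i * γ e j = 0 := by
    intro i j h e
    have h0 : witReal i j = 0 := by simp [witReal, h]
    rw [hsum i j, Finset.sum_eq_zero_iff_of_nonneg
      (fun l _ => mul_nonneg (hβ l i).1 (hγ l j).1)] at h0
    exact h0 e (Finset.mem_univ e)
  have hβ0 : ∀ e i, wit i (g e) = 0 → β e i = 0 := fun e i h => by
    simpa [hγ1] using hzero _ _ h e
  have hγ0 : ∀ e j, wit (f e) j = 0 → γ e j = 0 := fun e j h => by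
    simpa [hβ1] using hzero _ _ h e
  have total : ∀ i j (S : Finset (Fin 13)), (∀ e, e ∉ S → β e i = 0 ∨ γ e j = 0) →
      ∑ e ∈ S, β e i * γ e j = wit i j := by
    intro i j S hS
    have h : (wit i j : ℝ) = witReal i j := rfl
    rw [h, hsum i j]
    exact Finset.sum_subset (Finset.subset_univ S) fun e _ he => mul_eq_zero.2 (hS e he)
  have e22 : β 12 13 * γ 12 13 = 2 := by
    have hS : ∀ e, e ∉ ({12} : Finset (Fin 13)) → wit 13 (g e) = 0 ∨ wit (f e) 13 = 0 := by decide
    have := total 13 13 {12} fun e he => (hS e he).imp (hβ0 e 13) (hγ0 e 13)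
    rwa [Finset.sum_singleton, show wit 13 13 = 2 from rfl, Nat.cast_ofNat] at this
  -- Now that `x * y = 2`, the term `12` also vanishes wherever row `13` or column `13` does.
  have hβz : ∀ e i, (wit i (g e) = 0 ∨ e = 12 ∧ wit i 13 = 0) → β e i = 0 := by
    rintro e i (h | ⟨rfl, h⟩)
    · exact hβ0 e i h
    · exact (mul_eq_zero.1 (hzero i 13 h 12)).resolve_right fun h0 => by simp [h0] at e22
  have hγz : ∀ e j, (wit (f e) j = 0 ∨ e = 12 ∧ wit 13 j = 0) → γ e j = 0 := by
    rintro e j (h | ⟨rfl, h⟩)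
    · exact hγ0 e j h
    · exact (mul_eq_zero.1 (hzero 13 j h 12)).resolve_left fun h0 => by simp [h0] at e22
  have entry : ∀ i j (S : Finset (Fin 13)),
      (∀ e, e ∉ S → (wit i (g e) = 0 ∨ e = 12 ∧ wit i 13 = 0) ∨
        (wit (f e) j = 0 ∨ e = 12 ∧ wit 13 j = 0)) →
      ∑ e ∈ S, β e i * γ e j = wit i j :=
    fun i j S hS => total i j S fun e he => (hS e he).imp (hβz e i) (hγz e j)
  -- Here `α` lists the terms of a block in cyclic order, and column `j` is a unit vector on it.
  have colCycle : ∀ (α : Fin 4 → Fin 13) (j : Fin 16),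
      ((∀ k, α k ≠ α (k + 1)) ∧ (∀ k, wit (f (α k)) (g (α (k + 1))) = 1) ∧
        (∀ k, wit (f (α k)) (g (α (k + 1 + 1))) = 0) ∧
        (∀ k e, e ∉ ({α k, α (k + 1)} : Finset (Fin 13)) →
          wit (f (α k)) (g e) = 0 ∨ e = 12 ∧ wit (f (α k)) 13 = 0) ∧
        ∀ k, wit (f (α k)) j = if k = 0 then 1 else 0) →
      γ (α 0) j = 1 ∧ ∀ k, γ (α k) (g (α (k + 1))) = 1 := by
    rintro α j ⟨hne, h1, h2, h3, h4⟩
    have two : ∀ k j', γ (α k) j' + β (α (k + 1)) (f (α k)) * γ (α (k + 1)) j' =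
        wit (f (α k)) j' := by
      intro k j'
      have := entry (f (α k)) j' {α k, α (k + 1)} fun e he => Or.inl (h3 k e he)
      rwa [Finset.sum_pair (hne k), hβ1, one_mul] at this
    refine cycle_forces (u := fun k => β (α (k + 1)) (f (α k)))
      (v := fun k => γ (α k) (g (α (k + 1)))) (w := fun k => γ (α k) j)
      (fun k => (hβ _ _).1) (fun k => (hγ _ _).1) (fun k => ?_) (fun k => ?_) (fun k => ?_)
    · have := two k (g (α (k + 1)))
      rwa [hγ1, mul_one, h1, Nat.cast_one] at this
    · exact hzero _ _ (h2 k) _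
    · simpa [h4] using two k j
  -- The transpose of `colCycle`: transposing the block reverses its cyclic order.
  have rowCycle : ∀ (α : Fin 4 → Fin 13) (i : Fin 14),
      ((∀ k, α k ≠ α (k + 1)) ∧ (∀ k, wit (f (α (k + 1))) (g (α k)) = 1) ∧
        (∀ k, wit (f (α (k + 1 + 1))) (g (α k)) = 0) ∧
        (∀ k e, e ∉ ({α k, α (k + 1)} : Finset (Fin 13)) →
          wit (f e) (g (α k)) = 0 ∨ e = 12 ∧ wit 13 (g (α k)) = 0) ∧
        ∀ k, wit i (g (α k)) = if k = 0 then 1 else 0) →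
      β (α 0) i = 1 ∧ ∀ k, β (α k) (f (α (k + 1))) = 1 := by
    rintro α i ⟨hne, h1, h2, h3, h4⟩
    have two : ∀ k i', β (α k) i' + γ (α (k + 1)) (g (α k)) * β (α (k + 1)) i' =
        wit i' (g (α k)) := by
      intro k i'
      have := entry i' (g (α k)) {α k, α (k + 1)} fun e he => Or.inr (h3 k e he)
      rwa [Finset.sum_pair (hne k), hγ1, mul_one, mul_comm (β (α (k + 1)) i')] at this
    refine cycle_forces (u := fun k => γ (α (k + 1)) (g (α k)))
      (v := fun k => β (α k) (f (α (k + 1)))) (w := fun k => β (α k) i)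
      (fun k => (hγ _ _).1) (fun k => (hβ _ _).1) (fun k => ?_) (fun k => ?_) (fun k => ?_)
    · have := two k (f (α (k + 1)))
      rwa [hβ1, mul_one, h1, Nat.cast_one] at this
    · rw [mul_comm]
      exact hzero _ _ (h2 k) _
    · simpa [h4] using two k i
  obtain ⟨c0_13, c0_1⟩ : γ 0 13 = 1 ∧ γ 0 1 = 1 :=
    (colCycle ![0, 1, 2, 3] 13 (by decide)).imp_right fun h => h 0
  have c0_14 : γ 0 14 = 1 := (colCycle ![0, 1, 2, 3] 14 (by decide)).1
  have c1_15 : γ 1 15 = 1 := (colCycle ![1, 2, 3, 0] 15 (by decide)).1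
  obtain ⟨c4_12, c4_5⟩ : γ 4 12 = 1 ∧ γ 4 5 = 1 :=
    (colCycle ![4, 5, 6, 7] 12 (by decide)).imp_right fun h => h 0
  have c4_14 : γ 4 14 = 1 := (colCycle ![4, 5, 6, 7] 14 (by decide)).1
  have c5_15 : γ 5 15 = 1 := (colCycle ![5, 6, 7, 4] 15 (by decide)).1
  obtain ⟨r8_12, r10_9, r9_8⟩ : β 8 12 = 1 ∧ β 10 9 = 1 ∧ β 9 8 = 1 :=
    (rowCycle ![8, 11, 10, 9] 12 (by decide)).imp_right fun h => ⟨h 2, h 3⟩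
  have r10_13 : β 10 13 = 1 := (rowCycle ![10, 9, 8, 11] 13 (by decide)).1
  have c1_1 : γ 1 1 = 1 := hγ1 1
  have c5_5 : γ 5 5 = 1 := hγ1 5
  have c12_12 : γ 12 12 = 1 := hγ1 12
  have r8_8 : β 8 8 = 1 := hβ1 8
  have r9_9 : β 9 9 = 1 := hβ1 9
  have r12_12 : β 12 12 = 1 := hβ1 12
  -- The parameters of rows `12` and `13`: the first two coefficients on their blocks add up to `1`.
  have t12 : β 0 12 + β 1 12 = 1 := by
    simpa [c0_1, c1_1, show wit 12 1 = 1 from rfl] using entry 12 1 {0, 1} (by decide)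
  have t13 : β 4 13 + β 5 13 = 1 := by
    simpa [c4_5, c5_5, show wit 13 5 = 1 from rfl] using entry 13 5 {4, 5} (by decide)
  have s14 : γ 8 14 + γ 9 14 = 1 := by
    simpa [r8_8, r9_8, show wit 8 14 = 1 from rfl] using entry 8 14 {8, 9} (by decide)
  have s14' : γ 9 14 + γ 10 14 = 1 := by
    simpa [r9_9, r10_9, show wit 9 14 = 1 from rfl] using entry 9 14 {9, 10} (by decide)
  have s15 : γ 8 15 + γ 9 15 = 1 := by
    simpa [r8_8, r9_8, show wit 8 15 = 1 from rfl] using entry 8 15 {8, 9} (by decide)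
  have s15' : γ 9 15 + γ 10 15 = 1 := by
    simpa [r9_9, r10_9, show wit 9 15 = 1 from rfl] using entry 9 15 {9, 10} (by decide)
  have e12 : β 0 12 + γ 12 13 = 2 := by
    simpa [c0_13, r12_12, show wit 12 13 = 2 from rfl] using entry 12 13 {0, 12} (by decide)
  have e21 : β 4 13 + β 12 13 = 2 := by
    simpa [c4_12, c12_12, show wit 13 12 = 2 from rfl] using entry 13 12 {4, 12} (by decide)
  have e13 : β 0 12 + (γ 8 14 + γ 12 14) = 1 := by
    simpa [c0_14, r8_12, r12_12, show wit 12 14 = 1 from rfl] using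
      entry 12 14 {0, 8, 12} (by decide)
  have e14 : β 1 12 + (γ 8 15 + γ 12 15) = 1 := by
    simpa [c1_15, r8_12, r12_12, show wit 12 15 = 1 from rfl] using
      entry 12 15 {1, 8, 12} (by decide)
  have e23 : β 4 13 + (γ 10 14 + β 12 13 * γ 12 14) = 1 := by
    simpa [c4_14, r10_13, show wit 13 14 = 1 from rfl] using entry 13 14 {4, 10, 12} (by decide)
  have e24 : β 5 13 + (γ 10 15 + β 12 13 * γ 12 15) = 1 := by
    simpa [c5_15, r10_13, show wit 13 15 = 1 from rfl] using entry 13 15 {5, 10, 12} (by decide)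
  have hy : 1 ≤ β 12 13 := by linarith [(hβ 5 13).1]
  -- Column `14` gives `x ≤ y` and column `15` gives `y ≤ x`.
  have hxy : γ 12 13 = β 12 13 := by
    have h3 := mul_nonneg (sub_nonneg.2 hy) (hγ 12 14).1
    have h4 := mul_nonneg (sub_nonneg.2 hy) (hγ 12 15).1
    apply le_antisymm <;> linarith
  have hsq : √2 = γ 12 13 :=
    (Real.sqrt_eq_iff_mul_self_eq (by norm_num) (hγ 12 13).1).2 (by rw [← e22, ← hxy])
  rw [hsq]
  exact (hγ 12 13).2

/-- There exist a proper subfield F ⊊ ℝ and a nonnegative matrix A with entries in F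
such that rank₊(A, F) ≠ rank₊(A, ℝ). -/
theorem stmt8 :
    ∃ (F : Subfield ℝ) (_ : F ≠ ⊤) (m n : ℕ) (A : Matrix (Fin m) (Fin n) ℝ),
      (∀ i j, A i j ∈ F) ∧ (∀ i j, 0 ≤ A i j) ∧ nonnegRank F A ≠ nonnegRank ⊤ A := by
  have hirr : √2 ∉ (algebraMap ℚ ℝ).fieldRange := fun ⟨q, hq⟩ => irrational_sqrt_two ⟨q, hq⟩
  refine ⟨(algebraMap ℚ ℝ).fieldRange, fun h => hirr (h ▸ Subfield.mem_top _), 14, 16, witReal,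
    fun i j => natCast_mem _ _, fun i j => Nat.cast_nonneg _, fun h => ?_⟩
  have htop : nonnegRank ⊤ witReal ≤ 13 := by
    obtain ⟨b, c, hb, hc, hA⟩ := exists_real_factorization
    exact Nat.sInf_le ⟨b, c, fun l i => ⟨hb l i, Subfield.mem_top _⟩,
      fun l j => ⟨hc l j, Subfield.mem_top _⟩, hA⟩
  -- The infimum over `ℚ` is attained, since `witReal = ∑ i, e i * (row i of witReal)` is a factorization.
  have hne : {k | ∃ b : Fin k → Fin 14 → ℝ, ∃ c : Fin k → Fin 16 → ℝ,
      (∀ l i, 0 ≤ b l i ∧ b l i ∈ (algebraMap ℚ ℝ).fieldRange) ∧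
      (∀ l j, 0 ≤ c l j ∧ c l j ∈ (algebraMap ℚ ℝ).fieldRange) ∧
      witReal = ∑ l, Matrix.vecMulVec (b l) (c l)}.Nonempty := by
    refine ⟨14, fun l i => if i = l then 1 else 0, fun l => witReal l, fun l i => ?_,
      fun l j => ⟨Nat.cast_nonneg _, natCast_mem _ _⟩, ?_⟩
    · dsimp only
      split_ifs
      · exact ⟨zero_le_one, one_mem _⟩
      · exact ⟨le_rfl, zero_mem _⟩
    · ext i j
      simp [Matrix.sum_apply, Matrix.vecMulVec_apply]
  obtain ⟨b, c, hb, hc, hA⟩ := Nat.sInf_mem hne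
  exact hirr (sqrt_two_mem _ (h.trans_le htop) b c hb hc hA)
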